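/- Let (α_n)_{n≥1} be a nondecreasing sequence of rational numbers with α_n → ∞, and let k ≥ 0 be an integer. Then binom(α_n, k)_q converges to 1/(q;q)_k coefficientwise: for every integer m there exists N such that for all n ≥ N, the coefficient of q^m in the Laurent expansion of binom(α_n,k)_q equals the coefficient of q^m in the Laurent expansion of 1/((1−q)(1−q²)⋯(1−q^k)). -/

import Mathlib

/-!
The statement follows from one estimate: for rational `β > 1` with `M ≤ β`,
`(1 - q) [β]_q = 1 + q ^ M * g` for some `g` regular at `q = 0`, i.e. with Laurent expansion a power
series (`qRat_estimate`). Indeed `[β]_q = [a₁]_q + q ^ a₁ * G⁻¹` with `a₁ = ⌊β⌋` and `G` the tail of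
the `q`-continued fraction, and `(1 - q) [a₁]_q = 1 - q ^ a₁`, so it is enough that `G⁻¹` is
regular. This is `inv_qCF_false_mem`, an induction taking two coefficients at a time: a tail
`G = [a]_{q⁻¹} + q ^ (-a) / H` satisfies `q ^ a * G = q [a]_q + H⁻¹`, and
`H = [b]_q + q ^ b * G'⁻¹` with `b ≥ 1` and `G'⁻¹` regular has constant term `1`, whence so has
`q [a]_q + H⁻¹`.

Replacing a last coefficient `n + 1` in odd position by `n, 1` does not affect the `q`-continued
fraction (`qCF_true_evenize`), so the argument can be run on the Euclidean expansion itself.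

Finally `binom(α, k)_q = ∏ ((1 - q) [α - i]_q) / (q; q)_k`, the numerator is `1 + q ^ M * g` as soon
as `α ≥ M + k + 1`, and therefore the difference with `1 / (q; q)_k` has no coefficient below
degree `M`.
-/

noncomputable section

open Finset

/-- The `q`-integer `[n]_q = 1 + q + ⋯ + q^{n-1}` as a rational function in `q`. -/
def qNum (n : ℕ) : RatFunc ℚ := ∑ i ∈ Finset.range n, RatFunc.X ^ i

/-- The `q⁻¹`-integer `[n]_{q⁻¹} = 1 + q⁻¹ + ⋯ + q^{-(n-1)}`. -/
def qNumInv (n : ℕ) : RatFunc ℚ := ∑ i ∈ Finset.range n, (RatFunc.X)⁻¹ ^ i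

/-- The continued fraction expansion of `p/q` computed by the Euclidean algorithm. -/
def cfNat (p q : ℕ) : List ℕ :=
  if h : q = 0 then [] else (p / q) :: cfNat q (p % q)
termination_by q
decreasing_by exact Nat.mod_lt _ (Nat.pos_of_ne_zero h)

/-- Turn a continued fraction expansion into one of even length,
replacing a final coefficient `aₙ` by `aₙ - 1, 1` if needed. -/
def evenize (l : List ℕ) : List ℕ :=
  if l.length % 2 = 0 then l else l.dropLast ++ [l.getLast! - 1, 1]

/-- Evaluation of the Morier-Genoud--Ovsienko `q`-deformed continued fraction
`[a₁]_q + q^{a₁}/([a₂]_{q⁻¹} + q^{-a₂}/([a₃]_q + ⋯ + q^{a_{2m-1}}/[a_{2m}]_{q⁻¹}))`.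
The boolean records whether the current position is odd (`true`) or even (`false`).
(The empty continued fraction is sent to `0`; since division by zero yields `0`
in `RatFunc ℚ`, a final term `[a]_{q⁻¹} + q^{-a}/0⁻ = [a]_{q⁻¹}` comes out correctly.) -/
def qCF : Bool → List ℕ → RatFunc ℚ
  | _, [] => 0
  | true, a :: l => qNum a + RatFunc.X ^ a / qCF false l
  | false, a :: l => qNumInv a + (RatFunc.X)⁻¹ ^ a / qCF true l

/-- The Morier-Genoud--Ovsienko `q`-rational of `α > 1`, via the even-length
continued fraction expansion of `α`. -/
def qRatCF (α : ℚ) : RatFunc ℚ := qCF true (evenize (cfNat α.num.toNat α.den))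

/-- The Morier-Genoud--Ovsienko `q`-rational `[α]_q ∈ ℚ(q)`, for all `α ∈ ℚ`:
for `α > 1` it is given by the `q`-deformed continued fraction, and it is
extended to all of `ℚ` by the rule `[α-1]_q = ([α]_q - 1)/q`. -/
def qRat (α : ℚ) : RatFunc ℚ :=
  if 1 < α then qRatCF α
  else (qRatCF (α + (2 - ⌊α⌋).toNat) - qNum (2 - ⌊α⌋).toNat) / RatFunc.X ^ (2 - ⌊α⌋).toNat

/-- `{α}_q := [α+1]_q - [α]_q`, the substitute for `q^α`. -/
def qPow (α : ℚ) : RatFunc ℚ := qRat (α + 1) - qRat α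

/-- The `q`-factorial `[k]_q!`. -/
def qFact (k : ℕ) : RatFunc ℚ := ∏ i ∈ Finset.range k, qNum (i + 1)

/-- The `q`-binomial coefficient `binom(α,k)_q = [α]_q [α-1]_q ⋯ [α-k+1]_q / [k]_q!`. -/
def qBinom (α : ℚ) (k : ℕ) : RatFunc ℚ :=
  (∏ i ∈ Finset.range k, qRat (α - i)) / qFact k

/-- The Laurent-series expansion (at `q = 0`) of a rational function. -/
def lau (f : RatFunc ℚ) : LaurentSeries ℚ := ↑f


open scoped RatFunc in
/-- Laurent expansion at `0` as a ring homomorphism. Passing through a general field `F` keeps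
all instances on `RatFunc F` and `LaurentSeries F` derived from the field structure of `F`. -/
def expandHom (F : Type) [Field F] : RatFunc F →+* LaurentSeries F := algebraMap _ _

/-- `lau` as a ring homomorphism. -/
def lauHom : RatFunc ℚ →+* LaurentSeries ℚ := expandHom ℚ

lemma lau_eq (f : RatFunc ℚ) : lau f = lauHom f := rfl

lemma lauHom_X : lauHom RatFunc.X = HahnSeries.ofPowerSeries ℤ ℚ PowerSeries.X := by
  rw [PowerSeries.coe_X]
  exact RatFunc.coe_X (F := ℚ)

/-- The subring of `ℚ(q)` of rational functions that are regular at `q = 0`, described as those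
whose Laurent expansion at `q = 0` is a power series. -/
def regularAtZero : Subring (RatFunc ℚ) :=
  (HahnSeries.ofPowerSeries ℤ ℚ).range.comap lauHom

lemma X_mem_regular : (RatFunc.X : RatFunc ℚ) ∈ regularAtZero :=
  ⟨PowerSeries.X, lauHom_X.symm⟩

lemma lauHom_X_pow (n : ℕ) :
    lauHom (RatFunc.X ^ n)
      = HahnSeries.ofPowerSeries ℤ ℚ (PowerSeries.X ^ n) := by
  rw [map_pow, map_pow, lauHom_X]

lemma coeff_X_pow_mul_of_lt {g : RatFunc ℚ} (hg : g ∈ regularAtZero) {M : ℕ} {m : ℤ}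
    (h : m < M) : (lau (RatFunc.X ^ M * g)).coeff m = 0 := by
  obtain ⟨P, hP⟩ := hg
  rw [lau_eq, map_mul, ← hP, lauHom_X_pow, ← map_mul, PowerSeries.coeff_coe]
  split_ifs with h0
  · rfl
  · rw [PowerSeries.coeff_X_pow_mul', if_neg (by omega)]

lemma one_add_X_mul_ne_zero {g : RatFunc ℚ} (hg : g ∈ regularAtZero) :
    1 + RatFunc.X * g ≠ 0 := by
  obtain ⟨P, hP⟩ := hg
  intro h
  have h1 := congrArg lauHom h
  rw [map_add, map_mul, ← hP, ← pow_one RatFunc.X, lauHom_X_pow, map_one, map_zero,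
    ← map_mul, ← map_one (HahnSeries.ofPowerSeries ℤ ℚ), ← map_add,
    map_eq_zero_iff _ HahnSeries.ofPowerSeries_injective] at h1
  simpa using congrArg PowerSeries.constantCoeff h1

lemma inv_one_add_X_mul_mem {g : RatFunc ℚ} (hg : g ∈ regularAtZero) :
    (1 + RatFunc.X * g)⁻¹ ∈ regularAtZero := by
  have hne := one_add_X_mul_ne_zero hg
  obtain ⟨P, hP⟩ := hg
  refine ⟨(1 + PowerSeries.X * P)⁻¹, ?_⟩
  have hc : PowerSeries.constantCoeff (1 + PowerSeries.X * P) ≠ 0 := by simp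
  have h1 : lauHom (1 + RatFunc.X * g)
      = HahnSeries.ofPowerSeries ℤ ℚ (1 + PowerSeries.X * P) := by
    rw [map_add, map_mul, ← hP, ← pow_one RatFunc.X, lauHom_X_pow, map_one, map_add, map_mul,
      map_one, pow_one]
  rw [map_inv₀, h1]
  apply eq_inv_of_mul_eq_one_left
  rw [← map_mul, PowerSeries.inv_mul_cancel _ hc, map_one]

lemma qNum_mem (n : ℕ) : qNum n ∈ regularAtZero :=
  sum_mem fun i _ => pow_mem X_mem_regular i

lemma qNum_succ (n : ℕ) : qNum (n + 1) = 1 + RatFunc.X * qNum n := by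
  rw [qNum, geom_sum_succ, qNum, add_comm]

lemma one_sub_X_mul_qNum (n : ℕ) : (1 - RatFunc.X) * qNum n = 1 - RatFunc.X ^ n :=
  mul_neg_geom_sum _ _

lemma qNumInv_eq (n : ℕ) : qNumInv n = RatFunc.X * qNum n / RatFunc.X ^ n := by
  have hX : (RatFunc.X : RatFunc ℚ) ≠ 0 := RatFunc.X_ne_zero
  rw [eq_div_iff (pow_ne_zero _ hX)]
  induction n with
  | zero => simp [qNumInv, qNum]
  | succ n ih =>
    rw [qNumInv, Finset.sum_range_succ, ← qNumInv, qNum_succ, pow_succ, ← mul_assoc, add_mul, ih,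
      ← mul_pow, inv_mul_cancel₀ hX, one_pow]
    ring

/-- The reciprocal of a tail of a `q`-continued fraction, starting at an even position, is regular
at `q = 0`. The length is arbitrary: the convention `1 / 0 = 0` deals with the empty tail. -/
lemma inv_qCF_false_mem : ∀ l : List ℕ, (∀ a ∈ l, 1 ≤ a) → (qCF false l)⁻¹ ∈ regularAtZero
  | [], _ => by simp [qCF]
  | [a], h => by
    have hX : (RatFunc.X : RatFunc ℚ) ≠ 0 := RatFunc.X_ne_zero
    obtain ⟨c, rfl⟩ : ∃ c, a = c + 1 := ⟨a - 1, by have := h a (by simp); omega⟩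
    have h1 : (qCF false [c + 1])⁻¹ = RatFunc.X ^ c * (1 + RatFunc.X * qNum c)⁻¹ := by
      have := one_add_X_mul_ne_zero (qNum_mem c)
      simp only [qCF, div_zero, add_zero, qNumInv_eq, qNum_succ]
      field_simp
      ring
    rw [h1]
    exact mul_mem (pow_mem X_mem_regular c) (inv_one_add_X_mul_mem (qNum_mem c))
  | a :: b :: l, h => by
    have hX : (RatFunc.X : RatFunc ℚ) ≠ 0 := RatFunc.X_ne_zero
    have ih := inv_qCF_false_mem l fun x hx => h x (by simp [hx])
    obtain ⟨d, rfl⟩ : ∃ d, b = d + 1 := ⟨b - 1, by have := h b (by simp); omega⟩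
    set w : RatFunc ℚ := qNum d + RatFunc.X ^ d * (qCF false l)⁻¹ with hw
    have hwm : w ∈ regularAtZero := add_mem (qNum_mem d) (mul_mem (pow_mem X_mem_regular d) ih)
    have hH : qCF true ((d + 1) :: l) = 1 + RatFunc.X * w := by
      rw [qCF, qNum_succ, hw]; ring
    have hH0 := one_add_X_mul_ne_zero hwm
    have hum := inv_one_add_X_mul_mem hwm
    -- `H⁻¹ = 1 - q w H⁻¹` also has constant term `1`.
    have hu : (1 + RatFunc.X * w)⁻¹ = 1 - RatFunc.X * (w * (1 + RatFunc.X * w)⁻¹) := by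
      field_simp; ring
    have hvm : qNum a - w * (1 + RatFunc.X * w)⁻¹ ∈ regularAtZero :=
      sub_mem (qNum_mem a) (mul_mem hwm hum)
    have h1 : qCF false (a :: (d + 1) :: l)
        = (1 + RatFunc.X * (qNum a - w * (1 + RatFunc.X * w)⁻¹)) / RatFunc.X ^ a := by
      rw [qCF, hH, qNumInv_eq, div_eq_mul_inv _ (1 + RatFunc.X * w), inv_pow]
      nth_rewrite 1 [hu]
      ring
    rw [h1, inv_div, div_eq_mul_inv]
    exact mul_mem (pow_mem X_mem_regular a) (inv_one_add_X_mul_mem hvm)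

/-- Splitting the last coefficient `n + 1` as `n, 1` is harmless when it sits in an odd position of
the continued fraction: `[n]_q + q ^ n / [1]_{q⁻¹} = [n + 1]_q`. -/
lemma qCF_append_split (n : ℕ) : ∀ l : List ℕ, l.length % 2 = 0 →
    qCF true (l ++ [n, 1]) = qCF true (l ++ [n + 1])
  | [], _ => by simp [qCF, qNum, qNumInv, Finset.sum_range_succ]
  | [a], h => by simp at h
  | a :: b :: l, h => by
    have ih := qCF_append_split n l (by simp only [List.length_cons] at h; omega)
    simp only [List.cons_append, qCF, ih]

lemma qCF_true_evenize (l : List ℕ) (hl : ∀ a ∈ l, 1 ≤ a) :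
    qCF true (evenize l) = qCF true l := by
  unfold evenize
  split_ifs with h
  · rfl
  · rcases List.eq_nil_or_concat l with rfl | ⟨l', b, rfl⟩
    · simp at h
    · rw [List.concat_eq_append] at h hl ⊢
      have hb : 1 ≤ b := hl b (by simp)
      obtain ⟨n, rfl⟩ : ∃ n, b = n + 1 := ⟨b - 1, by omega⟩
      have hlast : (l' ++ [n + 1]).getLast! = n + 1 := by simp
      rw [hlast, List.dropLast_concat, Nat.add_sub_cancel]
      apply qCF_append_split
      simp only [List.length_append, List.length_singleton] at h
      omega

lemma one_le_of_mem_cfNat (q : ℕ) : ∀ p, q ≤ p → ∀ a ∈ cfNat p q, 1 ≤ a := by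
  induction q using Nat.strong_induction_on with
  | _ q ih =>
    intro p hpq a ha
    rw [cfNat] at ha
    split_ifs at ha with h
    · simp at ha
    · rcases List.mem_cons.1 ha with rfl | ha
      · exact Nat.div_pos hpq (Nat.pos_of_ne_zero h)
      · have hlt := Nat.mod_lt p (Nat.pos_of_ne_zero h)
        exact ih _ hlt q hlt.le a ha

/-- If `β ≥ M`, then `[β]_q` agrees with `1 / (1 - q)` modulo `q ^ M`. -/
lemma qRat_estimate {β : ℚ} (hβ : 1 < β) {M : ℕ} (hM : (M : ℚ) ≤ β) :
    ∃ g ∈ regularAtZero, (1 - RatFunc.X) * qRat β = 1 + RatFunc.X ^ M * g := by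
  have hden : (0 : ℚ) < β.den := by exact_mod_cast β.den_pos
  have hnum : (β.num.toNat : ℚ) = β * β.den := by
    have h0 : 0 ≤ β.num := Rat.num_nonneg.2 (by linarith)
    rw [Rat.mul_den_eq_num]
    exact_mod_cast Int.toNat_of_nonneg h0
  have hle : β.den ≤ β.num.toNat := by
    have : (β.den : ℚ) ≤ β.num.toNat := by rw [hnum]; nlinarith
    exact_mod_cast this
  have hMa : M ≤ β.num.toNat / β.den := by
    rw [Nat.le_div_iff_mul_le β.den_pos]
    have : (M : ℚ) * β.den ≤ β.num.toNat := by rw [hnum]; gcongr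
    exact_mod_cast this
  have hpos := one_le_of_mem_cfNat β.den β.num.toNat hle
  rw [qRat, if_pos hβ, qRatCF, qCF_true_evenize _ hpos]
  rw [cfNat, dif_neg β.den_pos.ne'] at hpos ⊢
  obtain ⟨c, hc⟩ := Nat.exists_eq_add_of_le hMa
  rw [hc] at hpos ⊢
  have hG := inv_qCF_false_mem _ fun x hx => hpos x (List.mem_cons_of_mem _ hx)
  set G := (qCF false (cfNat β.den (β.num.toNat % β.den))) with hGdef
  refine ⟨RatFunc.X ^ c * ((1 - RatFunc.X) * G⁻¹ - 1), mul_mem (pow_mem X_mem_regular c)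
    (sub_mem (mul_mem (sub_mem (one_mem _) X_mem_regular) hG) (one_mem _)), ?_⟩
  rw [qCF, mul_add, one_sub_X_mul_qNum, pow_add, ← hGdef]
  ring

lemma prod_qRat_estimate {β : ℚ} {M : ℕ} (k : ℕ) (h : (M : ℚ) + k + 1 ≤ β) :
    ∃ g ∈ regularAtZero,
      ∏ i ∈ Finset.range k, ((1 - RatFunc.X) * qRat (β - i)) = 1 + RatFunc.X ^ M * g := by
  induction k with
  | zero => exact ⟨0, zero_mem _, by simp⟩
  | succ k ih =>
    push_cast at h
    obtain ⟨g, hg, hprod⟩ := ih (by linarith)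
    have hM0 : (0 : ℚ) ≤ M := Nat.cast_nonneg M
    obtain ⟨g', hg', hq⟩ := qRat_estimate (β := β - k) (M := M) (by linarith) (by linarith)
    refine ⟨g + g' + RatFunc.X ^ M * (g * g'), add_mem (add_mem hg hg')
      (mul_mem (pow_mem X_mem_regular M) (mul_mem hg hg')), ?_⟩
    rw [Finset.prod_range_succ, hprod, hq]
    ring

lemma one_sub_X_ne_zero : (1 - RatFunc.X : RatFunc ℚ) ≠ 0 := by
  have := one_add_X_mul_ne_zero (neg_mem (one_mem regularAtZero))
  rwa [mul_neg_one, ← sub_eq_add_neg] at this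

lemma qBinom_eq (β : ℚ) (k : ℕ) :
    qBinom β k = (∏ i ∈ Finset.range k, ((1 - RatFunc.X) * qRat (β - i)))
      * (∏ i ∈ Finset.range k, (1 - RatFunc.X ^ (i + 1)))⁻¹ := by
  have hX := one_sub_X_ne_zero
  simp only [qBinom, qFact, ← one_sub_X_mul_qNum, Finset.prod_mul_distrib, Finset.prod_const]
  rw [← div_eq_mul_inv, mul_div_mul_left _ _ (pow_ne_zero _ hX)]

lemma inv_qPochhammer_mem (k : ℕ) :
    (∏ i ∈ Finset.range k, (1 - RatFunc.X ^ (i + 1)) : RatFunc ℚ)⁻¹ ∈ regularAtZero := by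
  rw [← Finset.prod_inv_distrib]
  refine prod_mem fun i _ => ?_
  have := inv_one_add_X_mul_mem (neg_mem (pow_mem X_mem_regular i))
  rwa [mul_neg, ← pow_succ', ← sub_eq_add_neg] at this

/-- If `(α_n)` is a nondecreasing sequence of rationals tending to infinity, then
`binom(α_n,k)_q → 1/(q;q)_k` coefficientwise in `ℚ((q))`. -/
theorem qBinom_tendsto (α : ℕ → ℚ) (hmono : Monotone α)
    (htop : Filter.Tendsto α Filter.atTop Filter.atTop) (k : ℕ) :
    ∀ m : ℤ, ∃ N : ℕ, ∀ n ≥ N,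
      (lau (qBinom (α n) k)).coeff m
        = (lau ((∏ i ∈ Finset.range k, (1 - RatFunc.X ^ (i + 1)))⁻¹)).coeff m := by
  intro m
  set M : ℕ := m.toNat + 1 with hM
  obtain ⟨N, hN⟩ := Filter.eventually_atTop.1 (htop.eventually_ge_atTop ((M : ℚ) + k + 1))
  refine ⟨N, fun n hn => ?_⟩
  obtain ⟨g, hg, hprod⟩ := prod_qRat_estimate k (hN n hn)
  have h0 := coeff_X_pow_mul_of_lt (mul_mem hg (inv_qPochhammer_mem k))
    (show m < (M : ℤ) by omega)
  rw [qBinom_eq, hprod, add_mul, one_mul, mul_assoc]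
  rw [lau_eq] at h0 ⊢
  rw [lau_eq, map_add, HahnSeries.coeff_add, h0, add_zero]

end
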